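/- Let A ∈ ℝ^{m×n} satisfy the RIP of order K+1 with constant δ ∈ [0,1). Let x ∈ ℝ^n be K-sparse with support S = supp(x), let S' be a proper subset of S, set r = P_{S'}^⊥ A x, let j ∈ {1,…,n} \ S with P_{S'}^⊥ a_j ≠ 0, and put t = ‖x_{S\S'}‖₂ · |⟨r, a_j⟩| / ‖P_{S'}^⊥ a_j‖₂. Then ‖r‖₂² + 2t ≤ (1 + (1 + ‖P_{S'}^⊥ a_j‖₂²)·δ) · ‖x_{S\S'}‖₂² / ‖P_{S'}^⊥ a_j‖₂². -/

import Mathlib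

open Finset

noncomputable section

/-- The support of a vector as a `Finset`. -/
def vsupp {n : ℕ} (x : Fin n → ℝ) : Finset (Fin n) :=
  Finset.univ.filter (fun i => x i ≠ 0)

/-- `A` satisfies the restricted isometry property of order `r` with constant `δ`. -/
def RIP {m n : ℕ} (A : Matrix (Fin m) (Fin n) ℝ) (r : ℕ) (δ : ℝ) : Prop :=
  ∀ x : Fin n → ℝ, (vsupp x).card ≤ r →
    (1 - δ) * (∑ i, x i ^ 2) ≤ (∑ i, (A.mulVec x) i ^ 2) ∧
      (∑ i, (A.mulVec x) i ^ 2) ≤ (1 + δ) * (∑ i, x i ^ 2)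

/-- The `j`-th column of `A`. -/
def col {m n : ℕ} (A : Matrix (Fin m) (Fin n) ℝ) (j : Fin n) : Fin m → ℝ :=
  fun i => A i j

/-- Euclidean dot product. -/
def dot {m : ℕ} (u v : Fin m → ℝ) : ℝ := ∑ i, u i * v i

/-- Squared Euclidean norm. -/
def nsq {m : ℕ} (v : Fin m → ℝ) : ℝ := ∑ i, v i ^ 2

/-- Euclidean norm. -/
def enorm {m : ℕ} (v : Fin m → ℝ) : ℝ := Real.sqrt (nsq v)

/-- Squared norm of the restriction of `x` to `T`. -/
def rsq {n : ℕ} (x : Fin n → ℝ) (T : Finset (Fin n)) : ℝ := ∑ i ∈ T, x i ^ 2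

/-- Norm of the restriction of `x` to `T`. -/
def rnorm {n : ℕ} (x : Fin n → ℝ) (T : Finset (Fin n)) : ℝ := Real.sqrt (rsq x T)

/-- Span of the columns of `A` indexed by `J`. -/
def colSpan {m n : ℕ} (A : Matrix (Fin m) (Fin n) ℝ) (J : Finset (Fin n)) :
    Submodule ℝ (EuclideanSpace ℝ (Fin m)) :=
  Submodule.span ℝ ((fun j => (WithLp.equiv 2 (Fin m → ℝ)).symm (col A j)) '' (J : Set (Fin n)))

/-- The projection `P_J^⊥ v` of `v` onto the orthogonal complement of the span of the
columns of `A` indexed by `J`. -/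
def projPerp {m n : ℕ} (A : Matrix (Fin m) (Fin n) ℝ) (J : Finset (Fin n)) (v : Fin m → ℝ) :
    Fin m → ℝ :=
  v - WithLp.equiv 2 (Fin m → ℝ)
    ((Submodule.orthogonalProjectionOnto (colSpan A J) ((WithLp.equiv 2 (Fin m → ℝ)).symm v) :
      EuclideanSpace ℝ (Fin m)))

/-- The OLS selection criterion value for index `j`, given measurements `y` and current
estimated support `Sk`. -/
def olsQuot {m n : ℕ} (A : Matrix (Fin m) (Fin n) ℝ) (y : Fin m → ℝ) (Sk : Finset (Fin n))
    (j : Fin n) : ℝ :=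
  |dot (projPerp A Sk y) (col A j)| / _root_.enorm (projPerp A Sk (col A j))

/-- The estimated support of OLS after `k` iterations (ties broken towards smaller index). -/
def olsSupp {m n : ℕ} (A : Matrix (Fin m) (Fin n) ℝ) (y : Fin m → ℝ) : ℕ → Finset (Fin n)
  | 0 => ∅
  | k + 1 =>
    let Sk := olsSupp A y k
    let cand := (Finset.univ \ Sk).filter
      (fun j => ∀ i ∈ Finset.univ \ Sk, olsQuot A y Sk i ≤ olsQuot A y Sk j)
    if h : cand.Nonempty then insert (cand.min' h) Sk else Sk

/-- The constant `C_K` from the paper. -/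
def CK (K : ℕ) : ℝ :=
  if K = 1 then 1 else if K = 2 then 2/3 else if K = 3 then 4/7 else 1 / Real.sqrt K

/-!
Adding a multiple `s • e_j` to the part of `x` outside `S'` keeps it `(K + 1)`-sparse, and applying
`P_{S'}^⊥ A` to the sum gives `r + s • P_{S'}^⊥ a_j`. As projections are contractions, the upper
half of the RIP bounds its squared norm by `(1 + δ) (‖x_{S \ S'}‖² + s²)` for every real `s`. The
claim is the case `s = ± ‖x_{S \ S'}‖ / ‖P_{S'}^⊥ a_j‖`, with the sign that of `⟨r, a_j⟩`.
-/

section InnerProductSpace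

variable {E : Type*} [NormedAddCommGroup E] [InnerProductSpace ℝ E]

lemma norm_add_smul_sq (u v : E) (s : ℝ) :
    ‖u + s • v‖ ^ 2 = ‖u‖ ^ 2 + 2 * (s * inner ℝ u v) + s ^ 2 * ‖v‖ ^ 2 := by
  rw [norm_add_sq_real, inner_smul_right, norm_smul, mul_pow, Real.norm_eq_abs, sq_abs]

lemma norm_sq_add_two_mul_abs_inner_div_norm_le {u v : E} (hv : v ≠ 0) {ρ δ : ℝ}
    (h : ∀ s : ℝ, ‖u + s • v‖ ^ 2 ≤ (1 + δ) * (ρ ^ 2 + s ^ 2)) :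
    ‖u‖ ^ 2 + 2 * (ρ * |inner ℝ u v| / ‖v‖) ≤ (1 + (1 + ‖v‖ ^ 2) * δ) * ρ ^ 2 / ‖v‖ ^ 2 := by
  obtain ⟨s, hs_sq, hs_inner⟩ : ∃ s : ℝ,
      s ^ 2 = (ρ / ‖v‖) ^ 2 ∧ s * inner ℝ u v = ρ * |inner ℝ u v| / ‖v‖ := by
    rcases abs_choice (inner ℝ u v) with habs | habs
    · exact ⟨ρ / ‖v‖, rfl, by rw [habs]; ring⟩
    · exact ⟨-(ρ / ‖v‖), neg_sq _, by rw [habs]; ring⟩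
  have hv_norm : ‖v‖ ≠ 0 := norm_ne_zero_iff.mpr hv
  calc ‖u‖ ^ 2 + 2 * (ρ * |inner ℝ u v| / ‖v‖)
      = ‖u + s • v‖ ^ 2 - ρ ^ 2 := by
        rw [norm_add_smul_sq, hs_inner, hs_sq]
        field_simp
        ring
    _ ≤ (1 + δ) * (ρ ^ 2 + s ^ 2) - ρ ^ 2 := by gcongr; exact h s
    _ = (1 + (1 + ‖v‖ ^ 2) * δ) * ρ ^ 2 / ‖v‖ ^ 2 := by
        rw [hs_sq]
        field_simp
        ring

lemma inner_starProjection_starProjection (U : Submodule ℝ E) [U.HasOrthogonalProjection]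
    (u v : E) : inner ℝ (U.starProjection u) (U.starProjection v) =
      inner ℝ (U.starProjection u) v := by
  rw [← U.inner_starProjection_left_eq_right,
    Submodule.starProjection_eq_self_iff.mpr (U.starProjection_apply_mem u)]

end InnerProductSpace

section Vectors

variable {n : ℕ}

lemma nsq_eq_norm_sq (v : Fin n → ℝ) : nsq v = ‖WithLp.toLp 2 v‖ ^ 2 :=
  (EuclideanSpace.real_norm_sq_eq _).symm

lemma enorm_eq_norm (v : Fin n → ℝ) : _root_.enorm v = ‖WithLp.toLp 2 v‖ := by
  rw [_root_.enorm, nsq_eq_norm_sq, Real.sqrt_sq (norm_nonneg _)]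

lemma dot_eq_inner (u v : Fin n → ℝ) :
    dot u v = inner ℝ (WithLp.toLp 2 u) (WithLp.toLp 2 v) := by
  rw [EuclideanSpace.inner_toLp_toLp, star_trivial, dotProduct_comm]
  rfl

lemma rnorm_sq (x : Fin n → ℝ) (T : Finset (Fin n)) : rnorm x T ^ 2 = rsq x T :=
  Real.sq_sqrt (sum_nonneg fun _ _ => sq_nonneg _)

lemma vsupp_indicator_add_single_subset (x : Fin n → ℝ) (T : Finset (Fin n)) (j : Fin n) (s : ℝ) :
    vsupp ((T : Set (Fin n)).indicator x + Pi.single j s) ⊆ insert j T := by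
  intro i hi
  by_contra h
  simp only [mem_insert, not_or] at h
  simp [vsupp, h.1, h.2] at hi

lemma nsq_indicator_add_single (x : Fin n → ℝ) {T : Finset (Fin n)} {j : Fin n} (hj : j ∉ T)
    (s : ℝ) : nsq ((T : Set (Fin n)).indicator x + Pi.single j s) = rsq x T + s ^ 2 := by
  have entry_sq (i : Fin n) :
      ((T : Set (Fin n)).indicator x i + (Pi.single j s : Fin n → ℝ) i) ^ 2 =
        (if i ∈ T then x i ^ 2 else 0) + if i = j then s ^ 2 else 0 := by
    rcases eq_or_ne i j with rfl | hij
    · simp [hj]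
    · by_cases hi : i ∈ T <;> simp [hij, hi]
  simp [nsq, rsq, entry_sq, sum_add_distrib]

end Vectors

section Columns

variable {m n : ℕ} (A : Matrix (Fin m) (Fin n) ℝ)

lemma toLp_projPerp (J : Finset (Fin n)) (v : Fin m → ℝ) :
    WithLp.toLp 2 (projPerp A J v) = (colSpan A J)ᗮ.starProjection (WithLp.toLp 2 v) :=
  (Submodule.starProjection_orthogonal_val _).symm

lemma toLp_mulVec_mem_colSpan {J : Finset (Fin n)} {w : Fin n → ℝ} (hw : ∀ i ∉ J, w i = 0) :
    WithLp.toLp 2 (A.mulVec w) ∈ colSpan A J := by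
  have mulVec_eq_sum_col : WithLp.toLp 2 (A.mulVec w) = ∑ i, w i • WithLp.toLp 2 (col A i) := by
    ext k
    simp [Matrix.mulVec, dotProduct, col, mul_comm]
  rw [mulVec_eq_sum_col]
  refine Submodule.sum_mem _ fun i _ => ?_
  by_cases hi : i ∈ J
  · exact Submodule.smul_mem _ _ (Submodule.subset_span ⟨i, hi, rfl⟩)
  · simp [hw i hi]

lemma starProjection_orthogonal_mulVec_congr {J : Finset (Fin n)} {x y : Fin n → ℝ}
    (hxy : ∀ i ∉ J, x i = y i) :
    (colSpan A J)ᗮ.starProjection (WithLp.toLp 2 (A.mulVec x)) =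
      (colSpan A J)ᗮ.starProjection (WithLp.toLp 2 (A.mulVec y)) := by
  rw [← sub_eq_zero, ← map_sub, Submodule.starProjection_apply_eq_zero_iff,
    Submodule.orthogonal_orthogonal, ← WithLp.toLp_sub, ← Matrix.mulVec_sub]
  exact toLp_mulVec_mem_colSpan A fun i hi => sub_eq_zero.mpr (hxy i hi)

lemma starProjection_orthogonal_mulVec_indicator_add_single {S S' : Finset (Fin n)}
    {x : Fin n → ℝ} (hS : vsupp x ⊆ S) (j : Fin n) (s : ℝ) :
    (colSpan A S')ᗮ.starProjection (WithLp.toLp 2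
        (A.mulVec ((↑(S \ S') : Set (Fin n)).indicator x + Pi.single j s))) =
      WithLp.toLp 2 (projPerp A S' (A.mulVec x)) +
        s • WithLp.toLp 2 (projPerp A S' (col A j)) := by
  have indicator_eq : ∀ i ∉ S', (↑(S \ S') : Set (Fin n)).indicator x i = x i := by
    intro i hi
    by_cases hiS : i ∈ S
    · simp [hi, hiS]
    · have hxi : x i = 0 := by
        by_contra hne
        exact hiS (hS (by simp [vsupp, hne]))
      simp [hiS, hxi]
  have mulVec_single : A.mulVec (Pi.single j s) = s • col A j := by
    ext k
    simp [col, mul_comm]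
  rw [Matrix.mulVec_add, mulVec_single, WithLp.toLp_add, WithLp.toLp_smul, map_add, map_smul,
    starProjection_orthogonal_mulVec_congr A indicator_eq, toLp_projPerp, toLp_projPerp]

variable {A}

lemma norm_projPerp_mulVec_add_smul_sq_le {δ : ℝ} {S S' : Finset (Fin n)}
    (hA : ∀ z : Fin n → ℝ, (vsupp z).card ≤ (S \ S').card + 1 →
      nsq (A.mulVec z) ≤ (1 + δ) * nsq z)
    {x : Fin n → ℝ} (hS : vsupp x ⊆ S) {j : Fin n} (hj : j ∉ S) (s : ℝ) :
    ‖WithLp.toLp 2 (projPerp A S' (A.mulVec x)) +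
        s • WithLp.toLp 2 (projPerp A S' (col A j))‖ ^ 2 ≤
      (1 + δ) * (rnorm x (S \ S') ^ 2 + s ^ 2) := by
  set z := (↑(S \ S') : Set (Fin n)).indicator x + Pi.single j s
  have hz_card : (vsupp z).card ≤ (S \ S').card + 1 :=
    (card_le_card (vsupp_indicator_add_single_subset x _ j s)).trans (card_insert_le _ _)
  have hz_nsq : nsq z = rnorm x (S \ S') ^ 2 + s ^ 2 := by
    rw [rnorm_sq, nsq_indicator_add_single x (fun h => hj (mem_sdiff.mp h).1)]
  calc _ = ‖(colSpan A S')ᗮ.starProjection (WithLp.toLp 2 (A.mulVec z))‖ ^ 2 := by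
        rw [starProjection_orthogonal_mulVec_indicator_add_single A hS]
    _ ≤ ‖WithLp.toLp 2 (A.mulVec z)‖ ^ 2 := by
        gcongr
        exact Submodule.norm_starProjection_apply_le _ _
    _ = nsq (A.mulVec z) := (nsq_eq_norm_sq _).symm
    _ ≤ (1 + δ) * (rnorm x (S \ S') ^ 2 + s ^ 2) := hz_nsq ▸ hA z hz_card

theorem stmt3_general {δ : ℝ} {S S' : Finset (Fin n)}
    (hA : ∀ z : Fin n → ℝ, (vsupp z).card ≤ (S \ S').card + 1 →
      nsq (A.mulVec z) ≤ (1 + δ) * nsq z)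
    {x : Fin n → ℝ} (hS : vsupp x ⊆ S) {j : Fin n} (hj : j ∉ S)
    (hproj : projPerp A S' (col A j) ≠ 0) :
    nsq (projPerp A S' (A.mulVec x)) + 2 * (rnorm x (S \ S') *
        |dot (projPerp A S' (A.mulVec x)) (col A j)| / _root_.enorm (projPerp A S' (col A j))) ≤
      (1 + (1 + nsq (projPerp A S' (col A j))) * δ) * rsq x (S \ S') /
        nsq (projPerp A S' (col A j)) := by
  have dot_col : dot (projPerp A S' (A.mulVec x)) (col A j) =
      inner ℝ (WithLp.toLp 2 (projPerp A S' (A.mulVec x)))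
        (WithLp.toLp 2 (projPerp A S' (col A j))) := by
    rw [dot_eq_inner, toLp_projPerp, toLp_projPerp, inner_starProjection_starProjection]
  have toLp_ne_zero : WithLp.toLp 2 (projPerp A S' (col A j)) ≠ 0 :=
    (WithLp.toLp_eq_zero 2).not.mpr hproj
  rw [dot_col, enorm_eq_norm, nsq_eq_norm_sq, nsq_eq_norm_sq, ← rnorm_sq]
  exact norm_sq_add_two_mul_abs_inner_div_norm_le toLp_ne_zero
    (norm_projPerp_mulVec_add_smul_sq_le hA hS hj)

end Columns

/-- under RIP of order `K+1` with `δ ∈ [0,1)`, with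
`t = ‖x_{S\S'}‖₂ |⟨r, a_j⟩| / ‖P_{S'}^⊥ a_j‖₂`, one has
`‖r‖₂² + 2t ≤ (1 + (1 + ‖P_{S'}^⊥ a_j‖₂²) δ) ‖x_{S\S'}‖₂² / ‖P_{S'}^⊥ a_j‖₂²`. -/
theorem stmt3 {m n K : ℕ} (A : Matrix (Fin m) (Fin n) ℝ) (δ : ℝ)
    (hδ0 : 0 ≤ δ) (hδ1 : δ < 1)
    (hRIP : RIP A (K + 1) δ)
    (x : Fin n → ℝ) (S : Finset (Fin n)) (hS : vsupp x = S) (hK : S.card ≤ K)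
    (S' : Finset (Fin n)) (hS' : S' ⊂ S)
    (r : Fin m → ℝ) (hr : r = projPerp A S' (A.mulVec x))
    (j : Fin n) (hj : j ∉ S) (hproj : projPerp A S' (col A j) ≠ 0)
    (t : ℝ) (ht : t = rnorm x (S \ S') * |dot r (col A j)| / _root_.enorm (projPerp A S' (col A j))) :
    nsq r + 2 * t ≤
      (1 + (1 + nsq (projPerp A S' (col A j))) * δ) * rsq x (S \ S') /
        nsq (projPerp A S' (col A j)) := by
  subst hr ht
  have card_sdiff_add_one_le : (S \ S').card + 1 ≤ K + 1 := by grw [sdiff_subset, hK]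
  exact stmt3_general (fun z hz => (hRIP z (hz.trans card_sdiff_add_one_le)).2) hS.subset hj hproj
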